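/- Let q⁰, q¹, …, qᵐ be pairwise mutually singular probability measures on a measurable space X and b ∈ ℝᵐ, and let g(λ) = inf over probability measures p of [KL(q⁰‖p) + Σᵢ λᵢ (KL(qⁱ‖p) − bᵢ)] for λ ∈ ℝ₊ᵐ. Then sup_{λ ∈ ℝ₊ᵐ} g(λ) < ∞ if and only if Σ_{i=1}^m e^{−bᵢ} < 1. -/

import Mathlib

open MeasureTheory

/-- The Kullback–Leibler divergence `KL(μ‖ν)`, with values in `EReal`. -/
noncomputable def KL {X : Type*} [MeasurableSpace X] (μ ν : Measure X) : EReal :=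
  open Classical in
  if μ ≪ ν ∧ Integrable (llr μ ν) μ then ((∫ x, llr μ ν x ∂μ : ℝ) : EReal) else ⊤

/-- The dual function `g(λ) = inf over probability measures p of
`KL(q⁰‖p) + ∑ i, λ i * (KL(qⁱ‖p) − b i)`. -/
noncomputable def dualFn {X : Type*} [MeasurableSpace X] {m : ℕ}
    (q0 : Measure X) (qi : Fin m → Measure X) (b : Fin m → ℝ) (l : Fin m → ℝ) : EReal :=
  ⨅ p : {p : Measure X // IsProbabilityMeasure p},
    KL q0 p.1 + ∑ i, (l i : EReal) * (KL (qi i) p.1 - (b i : EReal))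

/-!
If `A i` are disjoint sets carrying the measures `qⁱ`, then `KL(qⁱ‖p) ≥ -log p(A i)`, and
`∑ i, p(A i) ≤ 1`. Bounding the convex function `-log` from below by its tangents turns this into
`g(λ) ≥ 1 + log t - t * (1 - ∑ i, e^{-bᵢ})` for the multiplier `λ i = t * e^{-bᵢ}`, `t > 0`, and
this is unbounded as `t → ∞` as soon as `∑ i, e^{-bᵢ} ≥ 1`. If instead `∑ i, e^{-bᵢ} < 1`, then the
mixture of the measures `qⁱ` with weights `e^{-bᵢ}`, completed by `q⁰`, satisfies every constraint
`KL(qⁱ‖p) ≤ bᵢ`, and weak duality bounds `g` by the value `KL(q⁰‖p)` of this feasible point.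
-/

lemma pairwise_option_elim {α ι : Type*} {r : α → α → Prop} (hr : ∀ ⦃x y⦄, r x y → r y x)
    {a : α} {f : ι → α} (ha : ∀ i, r a (f i)) (hf : Pairwise fun i j => r (f i) (f j)) :
    Pairwise fun o o' : Option ι => r (o.elim a f) (o'.elim a f) := by
  rintro (_ | i) (_ | j) hne
  · exact absurd rfl hne
  · exact ha j
  · exact hr (ha i)
  · exact hf fun hij => hne (congrArg some hij)

lemma ereal_coe_sum {ι : Type*} (s : Finset ι) (f : ι → ℝ) :
    ((∑ i ∈ s, f i : ℝ) : EReal) = ∑ i ∈ s, (f i : EReal) :=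
  map_sum (⟨⟨Real.toEReal, EReal.coe_zero⟩, EReal.coe_add⟩ : ℝ →+ EReal) f s

section Measures

variable {X ι : Type*} [MeasurableSpace X]

lemma exists_measurableSet_ae_mem_pairwise_disjoint [Finite ι] {μ : ι → Measure X}
    (hμ : Pairwise fun i j => μ i ⟂ₘ μ j) :
    ∃ A : ι → Set X, (∀ i, MeasurableSet (A i)) ∧ (∀ i, ∀ᵐ x ∂μ i, x ∈ A i) ∧
      Pairwise fun i j => Disjoint (A i) (A j) := by
  have hae : Pairwise fun i j => Disjoint (ae (μ i)) (ae (μ j)) :=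
    fun i j hij => (hμ hij).disjoint_ae
  obtain ⟨s, hs, hdisj⟩ := hae.exists_mem_filter_of_disjoint
  choose A hA_ae hA_meas hA_sub using
    fun i => Filter.IsMeasurablyGenerated.exists_measurable_subset (hs i)
  exact ⟨A, hA_meas, hA_ae, fun i j hij => (hdisj hij).mono (hA_sub i) (hA_sub j)⟩

lemma exists_isProbabilityMeasure_forall_smul_le [Fintype ι] (μ : ι → Measure X)
    [∀ i, IsProbabilityMeasure (μ i)] {w : ι → ENNReal} (hw : ∑ i, w i = 1) :
    ∃ p : Measure X, IsProbabilityMeasure p ∧ ∀ i, w i • μ i ≤ p := by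
  refine ⟨∑ i, w i • μ i, ⟨?_⟩, fun i => ?_⟩
  · simp [Measure.finsetSum_apply, hw]
  · exact Finset.single_le_sum (f := fun j => w j • μ j) (fun _ _ => Measure.zero_le _)
      (Finset.mem_univ i)

end Measures

section KL

variable {X : Type*} [MeasurableSpace X] {q p : Measure X}

lemma ae_one_add_log_sub_le_llr [SigmaFinite q] [SigmaFinite p] (hqp : q ≪ p) {c : ℝ}
    (hc : 0 < c) :
    ∀ᵐ x ∂q, 1 + Real.log c - c * (p.rnDeriv q x).toReal ≤ llr q p x := by
  filter_upwards [exp_neg_llr hqp] with x hx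
  have h_exp : c * (p.rnDeriv q x).toReal = Real.exp (Real.log c - llr q p x) := by
    rw [← hx, sub_eq_add_neg, Real.exp_add, Real.exp_log hc]
  linarith [Real.add_one_le_exp (Real.log c - llr q p x)]

lemma integrable_one_add_log_sub_rnDeriv [IsFiniteMeasure q] [IsFiniteMeasure p] (c : ℝ) :
    Integrable (fun x => 1 + Real.log c - c * (p.rnDeriv q x).toReal) q :=
  (integrable_const _).sub (Measure.integrable_toReal_rnDeriv.const_mul c)

/- This is `-log p(A) ≤ KL(q‖p)`, stated through the tangents `1 + log c - c * x` of `-log x`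
because `Real.log 0 = 0` would make the direct form too weak when `p(A) = 0`. -/
lemma one_add_log_sub_le_KL [IsProbabilityMeasure q] [IsFiniteMeasure p] {A : Set X}
    (hA : ∀ᵐ x ∂q, x ∈ A) {c : ℝ} (hc : 0 < c) :
    ((1 + Real.log c - c * p.real A : ℝ) : EReal) ≤ KL q p := by
  unfold KL
  split_ifs with h
  swap
  · exact le_top
  obtain ⟨hqp, hint⟩ := h
  have h_mass : ∫ x, (p.rnDeriv q x).toReal ∂q ≤ p.real A :=
    calc ∫ x, (p.rnDeriv q x).toReal ∂q
        = ∫ x in A, (p.rnDeriv q x).toReal ∂q := by rw [Measure.restrict_eq_self_of_ae_mem hA]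
      _ ≤ p.real A := Measure.setIntegral_toReal_rnDeriv_le (measure_ne_top p A)
  rw [EReal.coe_le_coe_iff]
  calc 1 + Real.log c - c * p.real A
      ≤ 1 + Real.log c - c * ∫ x, (p.rnDeriv q x).toReal ∂q := by gcongr
    _ = ∫ x, (1 + Real.log c - c * (p.rnDeriv q x).toReal) ∂q := by
        rw [integral_sub (integrable_const _) (Measure.integrable_toReal_rnDeriv.const_mul c),
          integral_const_mul, integral_const, probReal_univ, one_smul]
    _ ≤ ∫ x, llr q p x ∂q :=
        integral_mono_ae (integrable_one_add_log_sub_rnDeriv c) hint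
          (ae_one_add_log_sub_le_llr hqp hc)

lemma ae_llr_le_neg_log [IsFiniteMeasure q] [SigmaFinite p] {a : ℝ} (ha : 0 < a)
    (hqp : q ≪ p) (h : ENNReal.ofReal a • q ≤ p) : ∀ᵐ x ∂q, llr q p x ≤ -Real.log a := by
  filter_upwards [hqp.ae_le (Measure.rnDeriv_le_one_of_le h),
    llr_smul_left hqp (ENNReal.ofReal a) (by simpa) ENNReal.ofReal_ne_top] with x hle hllr
  have h_nonpos : llr (ENNReal.ofReal a • q) p x ≤ 0 :=
    Real.log_nonpos ENNReal.toReal_nonneg (ENNReal.toReal_le_of_le_ofReal zero_le_one (by simpa))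
  rw [hllr, ENNReal.toReal_ofReal ha.le] at h_nonpos
  linarith

lemma KL_le_neg_log_of_smul_le [IsProbabilityMeasure q] [IsFiniteMeasure p] {a : ℝ} (ha : 0 < a)
    (h : ENNReal.ofReal a • q ≤ p) : KL q p ≤ ((-Real.log a : ℝ) : EReal) := by
  have hqp : q ≪ p :=
    (Measure.absolutelyContinuous_smul (by simpa)).trans (Measure.absolutelyContinuous_of_le h)
  have hle := ae_llr_le_neg_log ha hqp h
  have hint : Integrable (llr q p) q :=
    integrable_of_le_of_le (stronglyMeasurable_llr q p).aestronglyMeasurable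
      (ae_one_add_log_sub_le_llr hqp one_pos) hle
      (integrable_one_add_log_sub_rnDeriv 1) (integrable_const _)
  rw [KL, if_pos ⟨hqp, hint⟩, EReal.coe_le_coe_iff]
  calc ∫ x, llr q p x ∂q ≤ ∫ _, -Real.log a ∂q := integral_mono_ae hint (integrable_const _) hle
    _ = -Real.log a := by simp

end KL

section Dual

variable {X : Type*} [MeasurableSpace X] {m : ℕ} {q0 : Measure X} {qi : Fin m → Measure X}
  {b : Fin m → ℝ}

lemma dualFn_le_KL {l : Fin m → ℝ} (hl : ∀ i, 0 ≤ l i) {p : Measure X} [IsProbabilityMeasure p]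
    (hp : ∀ i, KL (qi i) p ≤ b i) : dualFn q0 qi b l ≤ KL q0 p := by
  have h_penalty : ∑ i, (l i : EReal) * (KL (qi i) p - b i) ≤ 0 :=
    Finset.sum_nonpos fun i _ => mul_nonpos_of_nonneg_of_nonpos (EReal.coe_nonneg.2 (hl i))
      ((EReal.sub_le_sub (hp i) le_rfl).trans EReal.sub_self_le_zero)
  exact iInf_le_of_le ⟨p, inferInstance⟩ (add_le_of_nonpos_right h_penalty)

lemma exists_forall_KL_le [IsProbabilityMeasure q0] [∀ i, IsProbabilityMeasure (qi i)]
    (hb : ∑ i, Real.exp (-b i) < 1) :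
    ∃ p : Measure X, IsProbabilityMeasure p ∧ (∀ i, KL (qi i) p ≤ b i) ∧
      KL q0 p ≤ ((-Real.log (1 - ∑ i, Real.exp (-b i)) : ℝ) : EReal) := by
  have : ∀ o : Option (Fin m), IsProbabilityMeasure (o.elim q0 qi) := by
    rintro (_ | i) <;> dsimp only [Option.elim] <;> infer_instance
  let w : Option (Fin m) → ℝ := fun o => o.elim (1 - ∑ i, Real.exp (-b i)) fun i => Real.exp (-b i)
  have hw_pos : ∀ o, 0 < w o := by
    rintro (_ | i)
    exacts [sub_pos.2 hb, Real.exp_pos _]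
  have hw_sum : ∑ o, ENNReal.ofReal (w o) = 1 := by
    rw [← ENNReal.ofReal_sum_of_nonneg fun o _ => (hw_pos o).le, Fintype.sum_option]
    simp [w]
  obtain ⟨p, hp, hle⟩ :=
    exists_isProbabilityMeasure_forall_smul_le (fun o => o.elim q0 qi) hw_sum
  refine ⟨p, hp, fun i => ?_, KL_le_neg_log_of_smul_le (hw_pos none) (hle none)⟩
  simpa [w] using KL_le_neg_log_of_smul_le (hw_pos (some i)) (hle (some i))

lemma mul_exp_neg_sub_le_mul_KL_sub {q p : Measure X} [IsProbabilityMeasure q] [IsFiniteMeasure p]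
    {A : Set X} (hA : ∀ᵐ x ∂q, x ∈ A) {t : ℝ} (ht : 0 ≤ t) (β : ℝ) :
    ((t * (Real.exp (-β) - p.real A) : ℝ) : EReal) ≤
      ((t * Real.exp (-β) : ℝ) : EReal) * (KL q p - β) := by
  have h_KL : ((1 - Real.exp β * p.real A : ℝ) : EReal) ≤ KL q p - β := by
    refine le_trans (le_of_eq ?_)
      (EReal.sub_le_sub (one_add_log_sub_le_KL (p := p) hA (Real.exp_pos β)) le_rfl)
    rw [← EReal.coe_sub, Real.log_exp]
    ring_nf
  calc ((t * (Real.exp (-β) - p.real A) : ℝ) : EReal)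
      = ((t * Real.exp (-β) : ℝ) : EReal) * ((1 - Real.exp β * p.real A : ℝ) : EReal) := by
        rw [← EReal.coe_mul, Real.exp_neg]
        field_simp
    _ ≤ ((t * Real.exp (-β) : ℝ) : EReal) * (KL q p - β) :=
        mul_le_mul_of_nonneg_left h_KL (EReal.coe_nonneg.2 (by positivity))

lemma one_add_log_sub_le_dualFn [IsProbabilityMeasure q0] [∀ i, IsProbabilityMeasure (qi i)]
    (hsing0 : ∀ i, q0 ⟂ₘ qi i) (hsing : Pairwise fun i j => qi i ⟂ₘ qi j) {t : ℝ} (ht : 0 < t) :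
    ((1 + Real.log t - t * (1 - ∑ i, Real.exp (-b i)) : ℝ) : EReal) ≤
      dualFn q0 qi b fun i => t * Real.exp (-b i) := by
  obtain ⟨A, hA_meas, hA_ae, hA_disj⟩ := exists_measurableSet_ae_mem_pairwise_disjoint
    (pairwise_option_elim (r := Measure.MutuallySingular) (fun _ _ h => h.symm) hsing0 hsing)
  refine le_iInf fun ⟨p, hp⟩ => ?_
  have h_mass : p.real (A none) + ∑ i, p.real (A (some i)) ≤ 1 := by
    rw [← Fintype.sum_option fun o => p.real (A o), ← probReal_univ (μ := p)]
    exact sum_measureReal_le_measureReal_univ (fun o _ => hA_meas o)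
      fun _ _ _ _ hne => hA_disj hne
  calc ((1 + Real.log t - t * (1 - ∑ i, Real.exp (-b i)) : ℝ) : EReal)
      ≤ ((1 + Real.log t - t * p.real (A none) +
          ∑ i, t * (Real.exp (-b i) - p.real (A (some i))) : ℝ) : EReal) := by
        rw [EReal.coe_le_coe_iff, ← Finset.mul_sum, Finset.sum_sub_distrib]
        linarith [mul_le_mul_of_nonneg_left h_mass ht.le]
    _ = ((1 + Real.log t - t * p.real (A none) : ℝ) : EReal) +
          ∑ i, ((t * (Real.exp (-b i) - p.real (A (some i))) : ℝ) : EReal) := by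
        rw [EReal.coe_add, ereal_coe_sum]
    _ ≤ KL q0 p + ∑ i, ((t * Real.exp (-b i) : ℝ) : EReal) * (KL (qi i) p - b i) :=
        add_le_add (one_add_log_sub_le_KL (q := q0) (hA_ae none) ht) <|
          Finset.sum_le_sum fun i _ =>
            mul_exp_neg_sub_le_mul_KL_sub (q := qi i) (hA_ae (some i)) ht.le (b i)

lemma iSup_dualFn_eq_top [IsProbabilityMeasure q0] [∀ i, IsProbabilityMeasure (qi i)]
    (hsing0 : ∀ i, q0 ⟂ₘ qi i) (hsing : Pairwise fun i j => qi i ⟂ₘ qi j)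
    (hb : 1 ≤ ∑ i, Real.exp (-b i)) :
    ⨆ l ∈ {l : Fin m → ℝ | ∀ i, 0 ≤ l i}, dualFn q0 qi b l = ⊤ := by
  refine EReal.eq_top_iff_forall_lt _ |>.2 fun y => ?_
  have h_nonneg : ∀ i, 0 ≤ Real.exp y * Real.exp (-b i) := fun i => by positivity
  calc (y : EReal)
      < ((1 + Real.log (Real.exp y) -
          Real.exp y * (1 - ∑ i, Real.exp (-b i)) : ℝ) : EReal) := by
        rw [EReal.coe_lt_coe_iff, Real.log_exp]
        linarith [mul_nonpos_of_nonneg_of_nonpos (Real.exp_pos y).le (sub_nonpos.2 hb)]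
    _ ≤ dualFn q0 qi b fun i => Real.exp y * Real.exp (-b i) :=
        one_add_log_sub_le_dualFn hsing0 hsing (Real.exp_pos y)
    _ ≤ ⨆ l ∈ {l : Fin m → ℝ | ∀ i, 0 ≤ l i}, dualFn q0 qi b l :=
        le_iSup₂_of_le _ h_nonneg le_rfl

end Dual

/-- for pairwise mutually singular probability measures `q⁰, …, qᵐ` and
thresholds `b`, the optimal dual value `sup_{λ ≥ 0} g(λ)` is finite if and only if
`∑ i, e^{−bᵢ} < 1`. -/
theorem stmt9 {X : Type*} [MeasurableSpace X] {m : ℕ}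
    (q0 : Measure X) [IsProbabilityMeasure q0]
    (qi : Fin m → Measure X) (hqi : ∀ i, IsProbabilityMeasure (qi i))
    (hsing0 : ∀ i, q0 ⟂ₘ qi i)
    (hsing : Pairwise fun i j => qi i ⟂ₘ qi j)
    (b : Fin m → ℝ) :
    (⨆ l ∈ {l : Fin m → ℝ | ∀ i, 0 ≤ l i}, dualFn q0 qi b l) < (⊤ : EReal)
      ↔ ∑ i, Real.exp (-b i) < 1 := by
  constructor
  · contrapose!
    exact fun hb => (iSup_dualFn_eq_top hsing0 hsing hb).ge
  · intro hb
    obtain ⟨p, hp, h_feasible, h_value⟩ := exists_forall_KL_le (q0 := q0) (qi := qi) hb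
    exact (iSup₂_le fun l hl => (dualFn_le_KL hl h_feasible).trans h_value).trans_lt
      (EReal.coe_lt_top _)
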